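/- Let k be a field and x, y ∈ O nonzero split octonions with Q(x) = Q(y) = 0. If L(x) = L(y), then there exists λ ∈ k with y = λ•x. Likewise, if R(x) = R(y), then x and y are proportional. -/

import Mathlib

/-! Write `x̄` for the conjugate of `x`. Since `x̄ * (x * w) = Q(x) • w`, an isotropic `x` satisfies
`x̄ * (x * w) = 0` for all `w`, so `L(x)` lies in the kernel of left multiplication by `x̄`. If
`L(x) = L(y)`, then `x̄ * (y * w) = 0` for all `w` (`oconj_omul_omul_eq_zero`).

The entries of these vectors, as `w` runs through the standard basis, are bilinear in the
coordinates of `x` and `y`. The eight coordinates fall into four pairs, dual with respect to `Q`.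
For two coordinates `p`, `q` that are not dual to each other, the minor `x_p y_q - x_q y_p` is,
up to sign, one of these entries. For dual coordinates the entries give only relations between
minors of different dual pairs. Two such minors agree up to sign while their product lies in the
ideal of the other minors; hence each has square zero, in every characteristic
(`minor_eq_zero_of_dual`). So all 2×2 minors of the pair `(x, y)` vanish (`coord_mul_coord_comm`),
and `x ≠ 0` makes `y` a multiple of `x`.

Conjugation reverses products and so carries `R(x)` to `L(x̄)`, which reduces the statement on
right ranges to the one on left ranges. -/

open Matrix

/-- 2×2 matrices over `R`. -/
abbrev M2 (R : Type*) := Matrix (Fin 2) (Fin 2) R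

/-- The split octonions over `R`: pairs of 2×2 matrices. -/
abbrev Oct (R : Type*) := M2 R × M2 R

variable {R : Type*} [CommRing R]

/-- Octonion multiplication (Cayley–Dickson on 2×2 matrices). -/
def omul (x y : Oct R) : Oct R :=
  (x.1 * y.1 - y.2.adjugate * x.2, x.2 * y.1.adjugate + y.2 * x.1)

/-- Octonion conjugation. -/
def oconj (x : Oct R) : Oct R := (x.1.adjugate, -x.2)

/-- The norm of a split octonion. -/
def oQ (x : Oct R) : R := x.1.det + x.2.det

/-- The associated bilinear form. -/
def obil (x y : Oct R) : R := oQ (x + y) - oQ x - oQ y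

lemma adj_add (A B : M2 R) : (A + B).adjugate = A.adjugate + B.adjugate := by
  ext i j
  fin_cases i <;> fin_cases j <;>
    simp [Matrix.adjugate_fin_two] <;> ring

lemma adj_smul (c : R) (A : M2 R) : (c • A).adjugate = c • A.adjugate := by
  rw [Matrix.adjugate_smul]
  norm_num

/-- Left multiplication by `z` as a linear map. -/
def Lmap (z : Oct R) : Oct R →ₗ[R] Oct R where
  toFun w := omul z w
  map_add' a b := by
    simp only [omul, Prod.fst_add, Prod.snd_add, adj_add, Prod.mk_add_mk]
    rw [Prod.ext_iff]
    constructor <;> dsimp only <;> noncomm_ring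
  map_smul' c a := by
    simp only [omul, Prod.smul_fst, Prod.smul_snd, adj_smul, RingHom.id_apply, Prod.smul_mk]
    rw [Prod.ext_iff]
    constructor <;> dsimp only <;>
      simp [Matrix.mul_smul, Matrix.smul_mul, smul_sub]

/-- Right multiplication by `z` as a linear map. -/
def Rmap (z : Oct R) : Oct R →ₗ[R] Oct R where
  toFun w := omul w z
  map_add' a b := by
    simp only [omul, Prod.fst_add, Prod.snd_add, Prod.mk_add_mk]
    rw [Prod.ext_iff]
    constructor <;> dsimp only <;> noncomm_ring
  map_smul' c a := by
    simp only [omul, Prod.smul_fst, Prod.smul_snd, RingHom.id_apply, Prod.smul_mk]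
    rw [Prod.ext_iff]
    constructor <;> dsimp only <;>
      simp [Matrix.mul_smul, Matrix.smul_mul, smul_sub]

/-- `L(z)`: the range of left multiplication by `z`. -/
def Lsub (z : Oct R) : Submodule R (Oct R) := LinearMap.range (Lmap z)

/-- `R(z)`: the range of right multiplication by `z`. -/
def Rsub (z : Oct R) : Submodule R (Oct R) := LinearMap.range (Rmap z)

lemma oconj_omul (x w : Oct R) : oconj (omul x w) = omul (oconj w) (oconj x) := by
  ext i j <;> fin_cases i <;> fin_cases j <;>
    simp [oconj, omul, Matrix.mul_apply, Matrix.adjugate_fin_two, Matrix.vecMul, dotProduct,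
      Matrix.vecHead, Matrix.vecTail, Fin.sum_univ_two] <;> ring

lemma oconj_oconj (x : Oct R) : oconj (oconj x) = x := by
  ext i j <;> fin_cases i <;> fin_cases j <;> simp [oconj, Matrix.adjugate_fin_two]

lemma oconj_smul (c : R) (x : Oct R) : oconj (c • x) = c • oconj x := by
  simp [oconj, adj_smul]

lemma oconj_zero : oconj (0 : Oct R) = 0 := by
  simpa using oconj_smul (0 : R) 0

lemma oQ_oconj (x : Oct R) : oQ (oconj x) = oQ x := by
  simp [oQ, oconj, Matrix.adjugate_fin_two, Matrix.det_fin_two]; ring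

lemma oconj_omul_omul (x w : Oct R) : omul (oconj x) (omul x w) = oQ x • w := by
  ext i j <;> fin_cases i <;> fin_cases j <;>
    simp [oconj, omul, oQ, Matrix.mul_apply, Matrix.adjugate_fin_two, Matrix.det_fin_two,
      Matrix.vecMul, dotProduct, Matrix.vecHead, Matrix.vecTail, Fin.sum_univ_two] <;> ring

lemma oconj_omul_omul_eq_zero {x y : Oct R} (hqx : oQ x = 0) (h : Lsub x = Lsub y) (w : Oct R) :
    omul (oconj x) (omul y w) = 0 := by
  have hw : omul y w ∈ Lsub x := h ▸ ⟨w, rfl⟩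
  obtain ⟨v, hv⟩ := hw
  rw [← hv]
  exact (oconj_omul_omul x v).trans (by rw [hqx, zero_smul])

/-- The coordinates of an octonion; the first index selects the matrix, the other two the entry. -/
def coord (x : Oct R) (p : Bool × Fin 2 × Fin 2) : R :=
  (cond p.1 x.2 x.1) p.2.1 p.2.2

/-- Here `(a, d)` and `(b, c)` are two dual pairs of coordinates of `x`, with primes for `y`. The
mixed minors in `hab` and `hac` show that `a` and `a'` annihilate `b * c' - c * b'`, so the opposite
minor `a * d' - d * a'` annihilates itself. -/
lemma minor_eq_zero_of_dual {k : Type*} [Field k] {a b c d a' b' c' d' : k}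
    (hab : a * b' = b * a') (hac : a * c' = c * a')
    (h : (a * d' - d * a') + (b * c' - c * b') = 0) :
    a * d' = d * a' := by
  have h2 : (a * d' - d * a') ^ 2 = 0 := by
    grind
  exact sub_eq_zero.mp (pow_eq_zero_iff (two_ne_zero) |>.mp h2)

/-- All 2×2 minors of the coordinates of `x` and `y` vanish. -/
lemma coord_mul_coord_comm {k : Type*} [Field k] {x y : Oct k}
    (H : ∀ w, omul (oconj x) (omul y w) = 0) (p q : Bool × Fin 2 × Fin 2) :
    coord x p * coord y q = coord x q * coord y p := by
  obtain ⟨A, B⟩ := x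
  obtain ⟨A', B'⟩ := y
  rw [A.eta_fin_two, B.eta_fin_two, A'.eta_fin_two, B'.eta_fin_two] at H ⊢
  generalize A 0 0 = a, A 0 1 = b, A 1 0 = c, A 1 1 = d at H ⊢
  generalize B 0 0 = e, B 0 1 = f, B 1 0 = g, B 1 1 = h at H ⊢
  generalize A' 0 0 = a', A' 0 1 = b', A' 1 0 = c', A' 1 1 = d' at H ⊢
  generalize B' 0 0 = e', B' 0 1 = f', B' 1 0 = g', B' 1 1 = h' at H ⊢
  have h1 := H (!![1, 0; 0, 0], 0)
  have h2 := H (!![0, 1; 0, 0], 0)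
  have h3 := H (!![0, 0; 1, 0], 0)
  have h4 := H (!![0, 0; 0, 1], 0)
  have h5 := H (0, !![1, 0; 0, 0])
  have h6 := H (0, !![0, 1; 0, 0])
  have h7 := H (0, !![0, 0; 1, 0])
  have h8 := H (0, !![0, 0; 0, 1])
  clear H
  simp only [oconj, omul, Matrix.adjugate_fin_two_of, Prod.ext_iff, ← Matrix.ext_iff,
    Fin.forall_fin_two] at h1 h2 h3 h4 h5 h6 h7 h8
  simp [Matrix.adjugate_fin_two] at h1 h2 h3 h4 h5 h6 h7 h8
  -- The dual pairs are `(a, d)`, `(b, c)`, `(e, h)`, `(f, g)`.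
  have had : a * d' = d * a' :=
    minor_eq_zero_of_dual (b := b) (c := c) (b' := b') (c' := c')
      (by grind) (by grind) (by grind)
  have hbc : b * c' = c * b' := by grind
  have heh : e * h' = h * e' := by grind
  have hfg : f * g' = g * f' := by grind
  obtain ⟨s, i, j⟩ := p
  obtain ⟨t, m, n⟩ := q
  cases s <;> cases t <;> fin_cases i <;> fin_cases j <;> fin_cases m <;> fin_cases n <;>
    simp [coord] <;> grind

lemma exists_smul_of_Lsub_eq {k : Type*} [Field k] {x y : Oct k} (hx : x ≠ 0) (hqx : oQ x = 0)
    (h : Lsub x = Lsub y) : ∃ c : k, y = c • x := by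
  have hm := coord_mul_coord_comm (oconj_omul_omul_eq_zero hqx h)
  obtain ⟨p, hp⟩ : ∃ p, coord x p ≠ 0 := by
    by_contra! h0
    refine hx (Prod.ext ?_ ?_) <;> ext i j
    exacts [h0 (false, i, j), h0 (true, i, j)]
  have hq : ∀ q, coord y q = coord y p / coord x p * coord x q := fun q ↦ by
    have := hm p q
    field_simp
    linear_combination this
  refine ⟨coord y p / coord x p, Prod.ext ?_ ?_⟩ <;> ext i j
  exacts [hq (false, i, j), hq (true, i, j)]

lemma mem_Rsub_iff (x z : Oct R) : z ∈ Rsub x ↔ oconj z ∈ Lsub (oconj x) := by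
  constructor
  · rintro ⟨w, rfl⟩
    exact ⟨oconj w, (oconj_omul w x).symm⟩
  · rintro ⟨w, hw⟩
    refine ⟨oconj w, ?_⟩
    have h : oconj (omul (oconj x) w) = oconj (oconj z) := congrArg oconj hw
    rwa [oconj_omul, oconj_oconj, oconj_oconj] at h

lemma Lsub_oconj_eq {x y : Oct R} (h : Rsub x = Rsub y) : Lsub (oconj x) = Lsub (oconj y) := by
  ext z
  rw [← oconj_oconj z, ← mem_Rsub_iff, ← mem_Rsub_iff, h]

theorem stmt5 (k : Type*) [Field k] (x y : Oct k) (hx : x ≠ 0) (hy : y ≠ 0)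
    (hqx : oQ x = 0) (hqy : oQ y = 0) :
    (Lsub x = Lsub y → ∃ c : k, y = c • x) ∧
    (Rsub x = Rsub y → ∃ c : k, y = c • x) := by
  refine ⟨exists_smul_of_Lsub_eq hx hqx, fun h ↦ ?_⟩
  have hx' : oconj x ≠ 0 := fun h0 ↦ hx (by rw [← oconj_oconj x, h0, oconj_zero])
  obtain ⟨c, hc⟩ := exists_smul_of_Lsub_eq hx' ((oQ_oconj x).trans hqx) (Lsub_oconj_eq h)
  exact ⟨c, by rw [← oconj_oconj y, hc, oconj_smul, oconj_oconj]⟩
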